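/- Let ρ₀ : ℝᵈ → ℝ be smooth, bounded above and below by positive constants, with bounded first and second partial derivatives, and with ∫ ρ₀ dγ = 1. For t ≥ 0 set ρ_t := P_t ρ₀. Then the function t ↦ ∫_{ℝᵈ} ρ_t(x) log ρ_t(x) dγ(x) is differentiable on (0,∞) and its derivative at t equals −(1/2) ∫_{ℝᵈ} ⟨C ∇ρ_t(x), ∇ρ_t(x)⟩ / ρ_t(x) dγ(x). (The entropy-dissipation (de Bruijn) identity used in the proof of the paper's Theorem 4: the time derivative of the relative entropy along the Ornstein–Uhlenbeck flow equals minus the relative Fisher information.) -/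

import Mathlib

open MeasureTheory Real
open scoped ENNReal RealInnerProductSpace

/-- Reinterpret a plain vector `Fin k → ℝ` as an element of `EuclideanSpace ℝ (Fin k)`. -/
def toEuc {k : ℕ} (v : Fin k → ℝ) : EuclideanSpace ℝ (Fin k) := WithLp.toLp 2 v

/-- Reinterpret an element of `EuclideanSpace ℝ (Fin k)` as a plain vector `Fin k → ℝ`. -/
def fromEuc {k : ℕ} (v : EuclideanSpace ℝ (Fin k)) : Fin k → ℝ := v

/-- The centered Gaussian measure `N(0, C)` on `ℝᵈ` (realized as `EuclideanSpace ℝ (Fin k)`),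
with covariance matrix `C`, defined via its density with respect to Lebesgue measure. -/
noncomputable def gaussianM {k : ℕ} (C : Matrix (Fin k) (Fin k) ℝ) :
    Measure (EuclideanSpace ℝ (Fin k)) :=
  MeasureTheory.volume.withDensity fun x =>
    ENNReal.ofReal ((2 * π) ^ (-(k : ℝ) / 2) * C.det ^ (-(1 : ℝ) / 2) *
      Real.exp (-(⟪x, toEuc (Matrix.mulVec C⁻¹ x)⟫) / 2))

/-- The Ornstein–Uhlenbeck (Mehler) semigroup associated to the measure `γ`:
`P_t f (x) = ∫ f (e^{-t/2} x + √(1 - e^{-t}) z) dγ(z)`. -/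
noncomputable def OU {k : ℕ} (γ : Measure (EuclideanSpace ℝ (Fin k))) (t : ℝ)
    (f : EuclideanSpace ℝ (Fin k) → ℝ) (x : EuclideanSpace ℝ (Fin k)) : ℝ :=
  ∫ z, f (Real.exp (-t / 2) • x + Real.sqrt (1 - Real.exp (-t)) • z) ∂γ

/-!
The density `ρ_t = P_t ρ₀` solves the Kolmogorov equation `∂ₜ ρ_t = L ρ_t`, where
`L h = ½ (tr (C ∇²h) - ⟨x, ∇h⟩)`: differentiating Mehler's formula in `t` produces a term linear in
the Gaussian variable `z`, and Gaussian integration by parts (Stein's identity) turns it into the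
second-order part of `L`. Since `ρ_t` and `L ρ_t` grow at most linearly in `x`, uniformly in `t`,
and `ρ_t` stays bounded away from `0`, the entropy may be differentiated under the integral, with
derivative `∫ (log ρ_t + 1) L ρ_t dγ`. A second use of Stein's identity rewrites this as
`-½ ∫ ⟨C ∇(log ρ_t), ∇ρ_t⟩ dγ`.
-/

open ProbabilityTheory

section Gaussian

lemma map_withDensity_comp {α β : Type*} [MeasurableSpace α] [MeasurableSpace β] (μ : Measure α)
    {T : α → β} (hT : Measurable T) {f : β → ℝ≥0∞} (hf : Measurable f) :
    (μ.withDensity (f ∘ T)).map T = (μ.map T).withDensity f := by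
  ext s hs
  rw [Measure.map_apply hT hs, withDensity_apply _ (hT hs), withDensity_apply _ hs,
    setLIntegral_map hs hf hT, Function.comp_def]

section Standard

variable {V : Type*} [NormedAddCommGroup V] [InnerProductSpace ℝ V] [FiniteDimensional ℝ V]
  [MeasurableSpace V] [BorelSpace V]

lemma integrable_rexp_neg_mul_sq_norm {b : ℝ} (hb : 0 < b) :
    Integrable fun x : V => exp (-b * ‖x‖ ^ 2) := by
  refine (GaussianFourier.integrable_cexp_neg_mul_sq_norm_add (V := V) (b := b)
    (by simpa using hb) 0 0).re.congr (.of_forall fun x => ?_)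
  have h : -(b : ℂ) * ‖x‖ ^ 2 + 0 * ⟪0, x⟫ = ((-b * ‖x‖ ^ 2 : ℝ) : ℂ) := by push_cast; ring
  simp only [h, RCLike.re_eq_complex_re, Complex.exp_ofReal_re]

lemma integral_exp_neg_sq_norm_div_two_mul_cexp_inner (t : V) :
    ∫ x : V, exp (-(1 / 2) * ‖x‖ ^ 2) • Complex.exp (⟪x, t⟫ * Complex.I) =
      ((2 * π) ^ ((Module.finrank ℝ V : ℝ) / 2) : ℝ) * Complex.exp (-‖t‖ ^ 2 / 2) := by
  have hexp : ∀ x : V, exp (-(1 / 2) * ‖x‖ ^ 2) • Complex.exp (⟪x, t⟫ * Complex.I) =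
      Complex.exp (-(1 / 2) * ‖x‖ ^ 2 + Complex.I * ⟪t, x⟫) := fun x => by
    rw [real_inner_comm, Complex.exp_add, Complex.real_smul, mul_comm Complex.I]
    push_cast
    rfl
  simp only [hexp]
  rw [GaussianFourier.integral_cexp_neg_mul_sq_norm_add (by norm_num),
    Complex.ofReal_cpow (by positivity), Complex.I_sq]
  push_cast
  ring_nf

lemma stdGaussian_eq_withDensity :
    stdGaussian V = volume.withDensity fun x =>
      ENNReal.ofReal ((2 * π) ^ (-(Module.finrank ℝ V : ℝ) / 2) * exp (-(1 / 2) * ‖x‖ ^ 2)) := by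
  have hint := (integrable_rexp_neg_mul_sq_norm (V := V) (b := 1 / 2) (by norm_num)).const_mul
    ((2 * π) ^ (-(Module.finrank ℝ V : ℝ) / 2))
  have := isFiniteMeasure_withDensity_ofReal hint.2
  refine Measure.ext_of_charFun (funext fun t => ?_)
  rw [charFun_stdGaussian, charFun_apply, integral_withDensity_eq_integral_toReal_smul
    (by fun_prop) (by simp)]
  have hnonneg : ∀ x : V,
      0 ≤ (2 * π) ^ (-(Module.finrank ℝ V : ℝ) / 2) * exp (-(1 / 2) * ‖x‖ ^ 2) := fun x => by
    positivity
  simp only [ENNReal.toReal_ofReal (hnonneg _), mul_smul]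
  rw [integral_smul, integral_exp_neg_sq_norm_div_two_mul_cexp_inner, Complex.real_smul,
    ← mul_assoc, ← Complex.ofReal_mul, ← rpow_add (by positivity), ← add_div, neg_add_cancel,
    zero_div, rpow_zero, Complex.ofReal_one, one_mul]

end Standard

variable {d : ℕ} {C : Matrix (Fin d) (Fin d) ℝ}

/-- The operator `v ↦ A v` on Euclidean space, i.e. `toEuc ∘ (A *ᵥ ·) ∘ fromEuc` bundled as a
continuous linear map. -/
noncomputable abbrev matrixOp (A : Matrix (Fin d) (Fin d) ℝ) :
    EuclideanSpace ℝ (Fin d) →L[ℝ] EuclideanSpace ℝ (Fin d) :=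
  Matrix.toEuclideanCLM (𝕜 := ℝ) A

lemma matrixOp_mul_apply (A B : Matrix (Fin d) (Fin d) ℝ) (x : EuclideanSpace ℝ (Fin d)) :
    matrixOp (A * B) x = matrixOp A (matrixOp B x) := by
  rw [matrixOp, map_mul]
  rfl

lemma matrixOp_matrixOp_inv (hC : IsUnit C.det) (x : EuclideanSpace ℝ (Fin d)) :
    matrixOp C (matrixOp C⁻¹ x) = x := by
  rw [← matrixOp_mul_apply, Matrix.mul_nonsing_inv _ hC]
  simp [matrixOp]

lemma map_matrixOp_volume {A : Matrix (Fin d) (Fin d) ℝ} (hA : A.det ≠ 0) :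
    volume.map (matrixOp A) = ENNReal.ofReal |A.det⁻¹| • volume := by
  have hdet : LinearMap.det (matrixOp A : EuclideanSpace ℝ (Fin d) →ₗ[ℝ] _) = A.det :=
    LinearMap.det_toLpLin 2 A
  have h := Measure.map_linearMap_addHaar_eq_smul_addHaar
    (volume : Measure (EuclideanSpace ℝ (Fin d))) (hdet ▸ hA)
  rwa [hdet] at h

lemma inner_matrixOp_comm (hC : C.IsHermitian) (x y : EuclideanSpace ℝ (Fin d)) :
    ⟪matrixOp C x, y⟫ = ⟪x, matrixOp C y⟫ := by
  have hT : IsSelfAdjoint (matrixOp C) := IsSelfAdjoint.map hC.isSelfAdjoint _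
  exact hT.isSymmetric x y

/-- The density of `gaussianM C` with respect to Lebesgue measure. -/
noncomputable def gaussianDensity (C : Matrix (Fin d) (Fin d) ℝ)
    (x : EuclideanSpace ℝ (Fin d)) : ℝ :=
  (2 * π) ^ (-(d : ℝ) / 2) * C.det ^ (-(1 : ℝ) / 2) * exp (-⟪x, matrixOp C⁻¹ x⟫ / 2)

lemma gaussianM_eq_withDensity (C : Matrix (Fin d) (Fin d) ℝ) :
    gaussianM C = volume.withDensity fun x => ENNReal.ofReal (gaussianDensity C x) := rfl

lemma continuous_gaussianDensity (C : Matrix (Fin d) (Fin d) ℝ) :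
    Continuous (gaussianDensity C) := by
  unfold gaussianDensity
  fun_prop

lemma gaussianDensity_nonneg (hC : 0 ≤ C.det) (x : EuclideanSpace ℝ (Fin d)) :
    0 ≤ gaussianDensity C x := by
  unfold gaussianDensity
  positivity

open scoped MatrixOrder in
lemma gaussianM_eq_multivariateGaussian (hC : C.PosDef) :
    gaussianM C = multivariateGaussian 0 C := by
  set A := CFC.sqrt C
  have hAA : A * A = C := CFC.sqrt_mul_sqrt_self C hC.posSemidef.nonneg
  have hA_psd : A.PosSemidef := Matrix.nonneg_iff_posSemidef.1 (CFC.sqrt_nonneg C)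
  have hdet : A.det ^ 2 = C.det := by rw [sq, ← Matrix.det_mul, hAA]
  have hA_det : 0 < A.det :=
    hA_psd.det_nonneg.lt_of_ne' fun h => hC.det_pos.ne' (by rw [← hdet, h, zero_pow two_ne_zero])
  have hA_unit : IsUnit A.det := hA_det.ne'.isUnit
  have hquad : ∀ x, ⟪matrixOp A x, matrixOp C⁻¹ (matrixOp A x)⟫ = ‖x‖ ^ 2 := fun x => by
    rw [inner_matrixOp_comm hA_psd.1, ← hAA, Matrix.mul_inv_rev, matrixOp_mul_apply,
      matrixOp_matrixOp_inv hA_unit, ← matrixOp_mul_apply, Matrix.nonsing_inv_mul _ hA_unit]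
    simp [matrixOp]
  have hdens : ∀ x, (2 * π) ^ (-(d : ℝ) / 2) * exp (-(1 / 2) * ‖x‖ ^ 2) =
      A.det * gaussianDensity C (matrixOp A x) := fun x => by
    rw [gaussianDensity, hquad, ← hdet, ← rpow_natCast_mul hA_det.le]
    have hexponent : ((2 : ℕ) : ℝ) * (-1 / 2) = -1 := by norm_num
    rw [hexponent, rpow_neg_one]
    field_simp
  have hmeas : Measurable fun x => ENNReal.ofReal (A.det * gaussianDensity C x) :=
    ((continuous_gaussianDensity C).measurable.const_mul _).ennreal_ofReal
  have hmap := map_withDensity_comp volume (matrixOp A).continuous.measurable hmeas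
  rw [map_matrixOp_volume hA_det.ne', abs_of_pos (inv_pos.2 hA_det), withDensity_smul_measure,
    ← withDensity_smul _ hmeas] at hmap
  simp only [multivariateGaussian, zero_add, stdGaussian_eq_withDensity,
    finrank_euclideanSpace_fin, hdens]
  rw [gaussianM_eq_withDensity]
  refine Eq.trans (congrArg _ (funext fun x => ?_)) hmap.symm
  simp only [Pi.smul_apply, smul_eq_mul]
  rw [← ENNReal.ofReal_mul (inv_nonneg.2 hA_det.le), inv_mul_cancel_left₀ hA_det.ne']

lemma isGaussian_gaussianM (hC : C.PosDef) : IsGaussian (gaussianM C) :=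
  gaussianM_eq_multivariateGaussian hC ▸ inferInstance

end Gaussian

section Moments

variable {E G : Type*} [NormedAddCommGroup E] [NormedSpace ℝ E] [CompleteSpace E]
  [SecondCountableTopology E] [MeasurableSpace E] [BorelSpace E] [NormedAddCommGroup G]
  {μ : Measure E} [IsGaussian μ]

lemma integrable_one_add_norm_pow (n : ℕ) : Integrable (fun x => (1 + ‖x‖) ^ n) μ := by
  have hnorm : MemLp (fun x : E => ‖x‖) n μ := (IsGaussian.memLp_id μ n (by simp)).norm
  have hsum : MemLp (fun x : E => 1 + ‖x‖) n μ := (memLp_const (1 : ℝ)).add hnorm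
  refine (hsum.integrable_norm_pow' (p := n)).congr (.of_forall fun x => ?_)
  simp only [Real.norm_of_nonneg (by positivity : 0 ≤ 1 + ‖x‖)]

lemma integrable_of_norm_le_one_add_norm_pow {f : E → G} (hf : Continuous f) {K : ℝ} {n : ℕ}
    (hK : ∀ x, ‖f x‖ ≤ K * (1 + ‖x‖) ^ n) : Integrable f μ :=
  ((integrable_one_add_norm_pow n).const_mul K).mono' hf.aestronglyMeasurable (.of_forall hK)

end Moments

section IntegrationByParts

set_option maxSynthPendingDepth 3

variable {d : ℕ} {C : Matrix (Fin d) (Fin d) ℝ}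

lemma integrable_gaussianM_iff (hC : 0 ≤ C.det) {g : EuclideanSpace ℝ (Fin d) → ℝ} :
    Integrable g (gaussianM C) ↔ Integrable fun x => g x * gaussianDensity C x := by
  rw [gaussianM_eq_withDensity, integrable_withDensity_iff_integrable_smul'
    (continuous_gaussianDensity C).measurable.ennreal_ofReal (by simp)]
  simp only [ENNReal.toReal_ofReal (gaussianDensity_nonneg hC _), smul_eq_mul, mul_comm]

lemma integral_gaussianM (hC : 0 ≤ C.det) (g : EuclideanSpace ℝ (Fin d) → ℝ) :
    ∫ x, g x ∂(gaussianM C) = ∫ x, g x * gaussianDensity C x := by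
  rw [gaussianM_eq_withDensity, integral_withDensity_eq_integral_toReal_smul
    (continuous_gaussianDensity C).measurable.ennreal_ofReal (by simp)]
  simp only [ENNReal.toReal_ofReal (gaussianDensity_nonneg hC _), smul_eq_mul, mul_comm]

lemma hasFDerivAt_gaussianDensity (hC : C.IsHermitian) (x : EuclideanSpace ℝ (Fin d)) :
    HasFDerivAt (gaussianDensity C)
      (-(gaussianDensity C x) • innerSL ℝ (matrixOp C⁻¹ x)) x := by
  have hquad : HasFDerivAt (fun y => -⟪y, matrixOp C⁻¹ y⟫ / 2)
      (-innerSL ℝ (matrixOp C⁻¹ x)) x := by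
    have h := ((hasFDerivAt_id x).inner ℝ (matrixOp C⁻¹).hasFDerivAt).neg.mul_const (1 / 2 : ℝ)
    simp only [id, ← div_eq_mul_one_div] at h
    refine h.congr_fderiv (ContinuousLinearMap.ext fun v => ?_)
    have hsymm : ⟪x, matrixOp C⁻¹ v⟫ = ⟪v, matrixOp C⁻¹ x⟫ := by
      rw [← inner_matrixOp_comm hC.inv, real_inner_comm]
    simp only [one_div, smul_neg, neg_apply, smul_apply, ContinuousLinearMap.comp_apply,
      ContinuousLinearMap.prod_apply, ContinuousLinearMap.id_apply, fderivInnerCLM_apply,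
      smul_eq_mul, coe_innerSL_apply, neg_inj]
    rw [hsymm, real_inner_comm v]
    ring
  refine (hquad.exp.const_mul ((2 * π) ^ (-(d : ℝ) / 2) * C.det ^ (-(1 : ℝ) / 2))).congr_fderiv ?_
  rw [smul_smul, smul_neg, neg_smul]
  rfl

lemma integral_fderiv_matrixOp_gaussianM (hC : C.PosDef) {g : EuclideanSpace ℝ (Fin d) → ℝ}
    {w : EuclideanSpace ℝ (Fin d)} (hg : Differentiable ℝ g) (hg_int : Integrable g (gaussianM C))
    (hg'_int : Integrable (fun x => fderiv ℝ g x (matrixOp C w)) (gaussianM C))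
    (hgx_int : Integrable (fun x => g x * ⟪x, w⟫) (gaussianM C)) :
    ∫ x, fderiv ℝ g x (matrixOp C w) ∂(gaussianM C) = ∫ x, g x * ⟪x, w⟫ ∂(gaussianM C) := by
  have hdet := hC.det_pos
  have hdens : ∀ x, fderiv ℝ (gaussianDensity C) x (matrixOp C w) =
      -(⟪x, w⟫ * gaussianDensity C x) := fun x => by
    rw [(hasFDerivAt_gaussianDensity hC.1 x).fderiv]
    simp [← inner_matrixOp_comm hC.1, matrixOp_matrixOp_inv hdet.ne'.isUnit, mul_comm]
  rw [integrable_gaussianM_iff hdet.le] at hg_int hg'_int hgx_int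
  have hibp := integral_mul_fderiv_eq_neg_fderiv_mul_of_integrable hg'_int
    (by simpa only [hdens, mul_neg, mul_assoc] using hgx_int.fun_neg) hg_int (fun x _ => hg x)
    fun x _ => (hasFDerivAt_gaussianDensity hC.1 x).differentiableAt
  simp only [hdens, mul_neg, integral_neg, neg_inj] at hibp
  simp only [integral_gaussianM hdet.le, ← hibp, mul_assoc]

/-- The trace `tr (C B) = ∑ᵢ B (C eᵢ) eᵢ` of a bilinear form `B` against the matrix `C`, as a
continuous linear functional of `B`, so that it commutes with integrals. -/
noncomputable def covTrace (C : Matrix (Fin d) (Fin d) ℝ) :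
    (EuclideanSpace ℝ (Fin d) →L[ℝ] EuclideanSpace ℝ (Fin d) →L[ℝ] ℝ) →L[ℝ] ℝ :=
  ∑ i, ContinuousLinearMap.apply ℝ ℝ (EuclideanSpace.basisFun (Fin d) ℝ i) ∘L
    ContinuousLinearMap.apply ℝ _ (matrixOp C (EuclideanSpace.basisFun (Fin d) ℝ i))

lemma covTrace_apply (B : EuclideanSpace ℝ (Fin d) →L[ℝ] EuclideanSpace ℝ (Fin d) →L[ℝ] ℝ) :
    covTrace C B = ∑ i, B (matrixOp C (EuclideanSpace.basisFun (Fin d) ℝ i))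
      (EuclideanSpace.basisFun (Fin d) ℝ i) := by
  simp [covTrace]

lemma covTrace_smulRight_fderiv (hC : C.IsHermitian) (g h : EuclideanSpace ℝ (Fin d) → ℝ)
    (x : EuclideanSpace ℝ (Fin d)) :
    covTrace C ((fderiv ℝ g x).smulRight (fderiv ℝ h x)) =
      ⟪matrixOp C (gradient g x), gradient h x⟫ := by
  have hgrad : ∀ f v, fderiv ℝ f x v = ⟪gradient f x, v⟫ := fun f v => by
    rw [gradient, InnerProductSpace.toDual_symm_apply]
  rw [covTrace_apply, ← (EuclideanSpace.basisFun (Fin d) ℝ).sum_inner_mul_inner]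
  simp only [ContinuousLinearMap.smulRight_apply, FunLike.coe_smul, Pi.smul_apply, smul_eq_mul,
    hgrad, inner_matrixOp_comm hC, real_inner_comm (gradient h x)]

lemma integral_apply_self_gaussianM (hC : C.PosDef)
    {F : EuclideanSpace ℝ (Fin d) → EuclideanSpace ℝ (Fin d) →L[ℝ] ℝ} (hF : Differentiable ℝ F)
    (hF_int : Integrable F (gaussianM C)) (hF'_int : Integrable (fderiv ℝ F) (gaussianM C))
    (hFx_int : Integrable (fun x => ‖x‖ * ‖F x‖) (gaussianM C)) :
    ∫ x, F x x ∂(gaussianM C) = ∫ x, covTrace C (fderiv ℝ F x) ∂(gaussianM C) := by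
  set e := EuclideanSpace.basisFun (Fin d) ℝ
  have hcoord : ∀ i x v, fderiv ℝ (fun y => F y (e i)) x v = fderiv ℝ F x v (e i) :=
    fun i x v => by
      rw [fderiv_clm_apply (hF x) (differentiableAt_const _)]
      simp
  have hexpand : ∀ x, F x x = ∑ i, F x (e i) * ⟪x, e i⟫ := fun x => by
    conv_lhs => enter [2]; rw [← e.sum_repr' x]
    simp only [map_sum, map_smul, smul_eq_mul, mul_comm, real_inner_comm x]
  have hF_cont := hF.continuous
  have hterm_int : ∀ i, Integrable (fun x => F x (e i) * ⟪x, e i⟫) (gaussianM C) := fun i => by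
    refine hFx_int.mono' (by fun_prop : Continuous _).aestronglyMeasurable (.of_forall fun x => ?_)
    calc ‖F x (e i) * ⟪x, e i⟫‖ ≤ (‖F x‖ * ‖e i‖) * (‖x‖ * ‖e i‖) := by
          rw [norm_mul]
          gcongr
          · exact (F x).le_opNorm _
          · exact norm_inner_le_norm _ _
      _ = ‖x‖ * ‖F x‖ := by rw [e.norm_eq_one]; ring
  have hterm'_int : ∀ i, Integrable (fun x => fderiv ℝ F x (matrixOp C (e i)) (e i))
      (gaussianM C) := fun i =>
    (hF'_int.apply_continuousLinearMap _).apply_continuousLinearMap _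
  simp only [hexpand, covTrace_apply]
  rw [integral_finsetSum _ fun i _ => hterm_int i, integral_finsetSum _ fun i _ => hterm'_int i]
  refine Finset.sum_congr rfl fun i _ => ?_
  rw [← integral_fderiv_matrixOp_gaussianM hC (fun x => (hF x).clm_apply (differentiableAt_const _))
    (hF_int.apply_continuousLinearMap _) (by simpa only [hcoord] using hterm'_int i) (hterm_int i)]
  simp only [hcoord, e]

/-- The generator `L h = ½ (tr (C ∇²h) - ⟨x, ∇h⟩)` of the semigroup `OU (gaussianM C)`. -/
noncomputable def ouGenerator (C : Matrix (Fin d) (Fin d) ℝ)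
    (h : EuclideanSpace ℝ (Fin d) → ℝ) (x : EuclideanSpace ℝ (Fin d)) : ℝ :=
  (covTrace C (fderiv ℝ (fderiv ℝ h) x) - fderiv ℝ h x x) / 2

lemma integral_mul_ouGenerator_of_integrable (hC : C.PosDef) {g h : EuclideanSpace ℝ (Fin d) → ℝ}
    (hg : Differentiable ℝ g) (hh' : Differentiable ℝ (fderiv ℝ h))
    (hgh'_int : Integrable (fun x => g x • fderiv ℝ h x) (gaussianM C))
    (hgh'x_int : Integrable (fun x => ‖x‖ * ‖g x • fderiv ℝ h x‖) (gaussianM C))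
    (hgh''_int : Integrable (fun x => g x • fderiv ℝ (fderiv ℝ h) x) (gaussianM C))
    (hg'h'_int : Integrable (fun x => (fderiv ℝ g x).smulRight (fderiv ℝ h x)) (gaussianM C)) :
    ∫ x, g x * ouGenerator C h x ∂(gaussianM C) =
      -(1 / 2) * ∫ x, ⟪matrixOp C (gradient g x), gradient h x⟫ ∂(gaussianM C) := by
  have hfderiv : fderiv ℝ (fun x => g x • fderiv ℝ h x) = fun x =>
      g x • fderiv ℝ (fderiv ℝ h) x + (fderiv ℝ g x).smulRight (fderiv ℝ h x) :=
    funext fun x => fderiv_fun_smul (hg x) (hh' x)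
  have hstein := integral_apply_self_gaussianM hC (hg.fun_smul hh') hgh'_int
    (by rw [hfderiv]; exact hgh''_int.add hg'h'_int) hgh'x_int
  simp only [hfderiv, map_add, map_smul, smul_eq_mul, FunLike.coe_smul, Pi.smul_apply,
    covTrace_smulRight_fderiv hC.1] at hstein
  have htrace_int := (covTrace C).integrable_comp hgh''_int
  have hinner_int := (covTrace C).integrable_comp hg'h'_int
  simp only [map_smul, smul_eq_mul, covTrace_smulRight_fderiv hC.1] at htrace_int hinner_int
  rw [integral_add htrace_int hinner_int] at hstein
  have happly_int : Integrable (fun x => g x * fderiv ℝ h x x) (gaussianM C) := by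
    have hg_cont := hg.continuous
    have hh'_cont := hh'.continuous
    refine hgh'x_int.mono' (by fun_prop : Continuous _).aestronglyMeasurable
      (.of_forall fun x => ?_)
    rw [mul_comm ‖x‖]
    exact (g x • fderiv ℝ h x).le_opNorm x
  have hgen : ∀ x, g x * ouGenerator C h x = 1 / 2 *
      (g x * covTrace C (fderiv ℝ (fderiv ℝ h) x) - g x * fderiv ℝ h x x) := fun x => by
    rw [ouGenerator]
    ring
  simp only [hgen]
  rw [integral_const_mul, integral_sub htrace_int happly_int, hstein]
  ring

end IntegrationByParts

section Mehler

set_option maxSynthPendingDepth 3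

variable {E G : Type*} [NormedAddCommGroup E] [NormedSpace ℝ E] [NormedAddCommGroup G]
  [NormedSpace ℝ G] {f : E → G} {M : ℝ}

lemma norm_le_of_norm_fderiv_le (hf : Differentiable ℝ f) (hM : ∀ x, ‖fderiv ℝ f x‖ ≤ M)
    (x : E) : ‖f x‖ ≤ ‖f 0‖ + M * ‖x‖ := by
  have h := convex_univ.norm_image_sub_le_of_norm_fderiv_le (fun y _ => hf y) (fun y _ => hM y)
    (Set.mem_univ 0) (Set.mem_univ x)
  rw [sub_zero] at h
  linarith [norm_le_insert' (f x) (f 0)]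

lemma norm_le_one_add_norm (hf : ContDiff ℝ 1 f) (hM : ∀ x, ‖fderiv ℝ f x‖ ≤ M) (x : E) :
    ‖f x‖ ≤ (‖f 0‖ + M) * (1 + ‖x‖) := by
  have hM₀ : 0 ≤ M := (norm_nonneg _).trans (hM 0)
  have h := norm_le_of_norm_fderiv_le (hf.differentiable one_ne_zero) hM x
  linarith [mul_nonneg (norm_nonneg (f 0)) (norm_nonneg x)]

section Affine

variable {Ω P : Type*} [MeasurableSpace Ω] {μ : Measure Ω} [NormedAddCommGroup P]
  [NormedSpace ℝ P] {A : Ω → P →L[ℝ] E} {b : Ω → E}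

lemma integrable_fderiv_comp_affine (hA : Integrable A μ) (hb : AEStronglyMeasurable b μ)
    (hf : ContDiff ℝ 1 f) (hM : ∀ x, ‖fderiv ℝ f x‖ ≤ M) (p : P) :
    Integrable (fun z => fderiv ℝ f (A z p + b z) ∘L A z) μ := by
  refine (hA.norm.const_mul M).mono' ?_ (.of_forall fun z => ?_)
  · exact isBoundedBilinearMap_comp.continuous.comp_aestronglyMeasurable
      (((hf.continuous_fderiv one_ne_zero).comp_aestronglyMeasurable
        ((hA.1.apply_continuousLinearMap p).add hb)).prodMk hA.1)
  · exact (ContinuousLinearMap.opNorm_comp_le _ _).trans (by gcongr; exact hM _)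

lemma hasFDerivAt_integral_comp_affine [IsFiniteMeasure μ] (hA : Integrable A μ)
    (hb : Integrable b μ) (hf : ContDiff ℝ 1 f) (hM : ∀ x, ‖fderiv ℝ f x‖ ≤ M) (p : P) :
    HasFDerivAt (fun q => ∫ z, f (A z q + b z) ∂μ)
      (∫ z, fderiv ℝ f (A z p + b z) ∘L A z ∂μ) p := by
  have hf' : Differentiable ℝ f := hf.differentiable one_ne_zero
  have hAb : ∀ q, Integrable (fun z => A z q + b z) μ := fun q =>
    (hA.apply_continuousLinearMap q).add hb
  refine hasFDerivAt_integral_of_dominated_of_fderiv_le (s := Set.univ)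
    (bound := fun z => M * ‖A z‖) (F' := fun q z => fderiv ℝ f (A z q + b z) ∘L A z)
    Filter.univ_mem (.of_forall fun q => hf.continuous.comp_aestronglyMeasurable (hAb q).1) ?_
    (integrable_fderiv_comp_affine hA hb.1 hf hM p).1
    (.of_forall fun z q _ => ?_) (hA.norm.const_mul M) (.of_forall fun z q _ => ?_)
  · exact ((integrable_const ‖f 0‖).add ((hAb p).norm.const_mul M)).mono'
      (hf.continuous.comp_aestronglyMeasurable (hAb p).1)
      (.of_forall fun z => norm_le_of_norm_fderiv_le hf' hM _)
  · exact (ContinuousLinearMap.opNorm_comp_le _ _).trans (by gcongr; exact hM _)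
  · exact (hf' _).hasFDerivAt.comp q ((A z).hasFDerivAt.add_const (b z))

end Affine

variable [MeasurableSpace E] {γ : Measure E} {c s : ℝ}

/-- The average of `f (c x + s z)` over `z ∼ γ`. The Mehler semigroup `OU γ t` is the case
`c = exp (-t / 2)`, `s = √(1 - exp (-t))`; vector values are allowed so that the average can be
applied to derivatives. -/
noncomputable def mehlerAvg (γ : Measure E) (c s : ℝ) (f : E → G) (x : E) : G :=
  ∫ z, f (c • x + s • z) ∂γ

lemma norm_mehlerAvg_le [IsProbabilityMeasure γ] (hM : ∀ x, ‖f x‖ ≤ M) (x : E) :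
    ‖mehlerAvg γ c s f x‖ ≤ M := by
  have h := norm_integral_le_of_norm_le_const (μ := γ) (.of_forall fun z => hM (c • x + s • z))
  rwa [probReal_univ, mul_one] at h

lemma le_mehlerAvg [IsProbabilityMeasure γ] {f : E → ℝ} {a : ℝ} {x : E}
    (hf_int : Integrable (fun z => f (c • x + s • z)) γ) (ha : ∀ y, a ≤ f y) :
    a ≤ mehlerAvg γ c s f x := by
  simpa [mehlerAvg] using integral_mono (integrable_const a) hf_int fun z => ha _

variable [IsFiniteMeasure γ]

lemma hasFDerivAt_mehlerAvg (hγ : Integrable id γ) (hf : ContDiff ℝ 1 f)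
    (hM : ∀ x, ‖fderiv ℝ f x‖ ≤ M) (x : E) :
    HasFDerivAt (mehlerAvg γ c s f) (c • mehlerAvg γ c s (fderiv ℝ f) x) x := by
  have h := hasFDerivAt_integral_comp_affine (μ := γ) (A := fun _ => c • .id ℝ E)
    (b := fun z => s • z) (integrable_const _) (hγ.smul s) hf hM x
  refine h.congr_fderiv ?_
  rw [mehlerAvg, ← integral_smul]
  exact integral_congr_ae (.of_forall fun z => by ext v; simp)

lemma fderiv_mehlerAvg (hγ : Integrable id γ) (hf : ContDiff ℝ 1 f)
    (hM : ∀ x, ‖fderiv ℝ f x‖ ≤ M) :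
    fderiv ℝ (mehlerAvg γ c s f) = c • mehlerAvg γ c s (fderiv ℝ f) :=
  funext fun x => (hasFDerivAt_mehlerAvg hγ hf hM x).fderiv

variable [BorelSpace E] [SecondCountableTopology E]

lemma continuous_mehlerAvg (hf : Continuous f) (hM : ∀ x, ‖f x‖ ≤ M) :
    Continuous (mehlerAvg γ c s f) :=
  continuous_of_dominated (fun _ => (by fun_prop : Continuous _).aestronglyMeasurable)
    (fun _ => .of_forall fun _ => hM _) (integrable_const M) (.of_forall fun _ => by fun_prop)

lemma integrable_comp_affine (hγ : Integrable id γ) (hf : ContDiff ℝ 1 f)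
    (hM : ∀ x, ‖fderiv ℝ f x‖ ≤ M) (x : E) : Integrable (fun z => f (c • x + s • z)) γ := by
  have hf_cont := hf.continuous
  have hz : Integrable (fun z => c • x + s • z) γ := (integrable_const _).add (hγ.smul s)
  exact ((integrable_const ‖f 0‖).add (hz.norm.const_mul M)).mono'
    (by fun_prop : Continuous _).aestronglyMeasurable
    (.of_forall fun z => norm_le_of_norm_fderiv_le (hf.differentiable one_ne_zero) hM _)

lemma hasDerivAt_mehlerAvg_comp (hγ : Integrable id γ) (hf : ContDiff ℝ 1 f)
    (hM : ∀ x, ‖fderiv ℝ f x‖ ≤ M) {c s : ℝ → ℝ} {c' s' t : ℝ} (hc : HasDerivAt c c' t)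
    (hs : HasDerivAt s s' t) (x : E) :
    HasDerivAt (fun τ => mehlerAvg γ (c τ) (s τ) f x)
      (c' • mehlerAvg γ (c t) (s t) (fderiv ℝ f) x x +
        s' • ∫ z, fderiv ℝ f (c t • x + s t • z) z ∂γ) t := by
  set A : E → ℝ × ℝ →L[ℝ] E := fun z =>
    (ContinuousLinearMap.fst ℝ ℝ ℝ).smulRight x + (ContinuousLinearMap.snd ℝ ℝ ℝ).smulRight z
  have hA : Integrable A γ := (integrable_const _).add
    ((ContinuousLinearMap.smulRightL ℝ (ℝ × ℝ) E (.snd ℝ ℝ ℝ)).integrable_comp hγ)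
  have hDA_int := integrable_fderiv_comp_affine hA (b := 0) aestronglyMeasurable_zero hf hM
    (c t, s t)
  have hD_cont : Continuous fun z => fderiv ℝ f (c t • x + s t • z) :=
    (hf.continuous_fderiv one_ne_zero).comp (by fun_prop)
  have hD_int : Integrable (fun z => fderiv ℝ f (c t • x + s t • z)) γ :=
    (integrable_const M).mono' hD_cont.aestronglyMeasurable (.of_forall fun _ => hM _)
  have hDz_int : Integrable (fun z => fderiv ℝ f (c t • x + s t • z) z) γ :=
    (hγ.norm.const_mul M).mono' (by fun_prop : Continuous _).aestronglyMeasurable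
      (.of_forall fun z => ContinuousLinearMap.le_of_opNorm_le _ (hM _) z)
  have h := (hasFDerivAt_integral_comp_affine (b := 0) hA (integrable_zero _ _ γ) hf hM
    (c t, s t)).comp_hasDerivAt t (hc.prodMk hs)
  rw [ContinuousLinearMap.integral_apply hDA_int] at h
  simp only [A, Pi.zero_apply, add_zero, ContinuousLinearMap.comp_apply, add_apply,
    ContinuousLinearMap.smulRight_apply, ContinuousLinearMap.coe_fst',
    ContinuousLinearMap.coe_snd', map_add, map_smul] at h
  rwa [integral_add ((hD_int.apply_continuousLinearMap x).fun_smul c') (hDz_int.fun_smul s'),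
    integral_smul, integral_smul, ← ContinuousLinearMap.integral_apply hD_int] at h

end Mehler

section BoundedDerivs

set_option maxSynthPendingDepth 3

variable {E G : Type*} [NormedAddCommGroup E] [NormedSpace ℝ E] [NormedAddCommGroup G]
  [NormedSpace ℝ G]

/-- `f` is `C²` with first and second derivatives bounded by `M`. No bound on `f` itself is
imposed: it then grows at most linearly, which is all that Gaussian integrability needs. -/
structure HasBoundedDerivs (f : E → G) (M : ℝ) : Prop where
  contDiff : ContDiff ℝ 2 f
  norm_fderiv_le : ∀ x, ‖fderiv ℝ f x‖ ≤ M
  norm_fderiv_fderiv_le : ∀ x, ‖fderiv ℝ (fderiv ℝ f) x‖ ≤ M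

namespace HasBoundedDerivs

variable {f : E → G} {M : ℝ}

lemma contDiff_one (hf : HasBoundedDerivs f M) : ContDiff ℝ 1 f := hf.contDiff.of_le one_le_two

lemma differentiable (hf : HasBoundedDerivs f M) : Differentiable ℝ f :=
  hf.contDiff.differentiable two_ne_zero

lemma contDiff_fderiv (hf : HasBoundedDerivs f M) : ContDiff ℝ 1 (fderiv ℝ f) :=
  hf.contDiff.fderiv_right (by norm_num)

lemma bound_nonneg (hf : HasBoundedDerivs f M) : 0 ≤ M :=
  (norm_nonneg _).trans (hf.norm_fderiv_le 0)

variable [MeasurableSpace E] {γ : Measure E} {c s : ℝ}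

lemma fderiv_fderiv_mehlerAvg [IsFiniteMeasure γ] (hf : HasBoundedDerivs f M)
    (hγ : Integrable id γ) : fderiv ℝ (fderiv ℝ (mehlerAvg γ c s f)) =
      c ^ 2 • mehlerAvg γ c s (fderiv ℝ (fderiv ℝ f)) := by
  rw [fderiv_mehlerAvg hγ hf.contDiff_one hf.norm_fderiv_le, fderiv_const_smul_field,
    fderiv_mehlerAvg hγ hf.contDiff_fderiv hf.norm_fderiv_fderiv_le, smul_smul, sq]

lemma norm_mehlerAvg_le_one_add_norm [IsProbabilityMeasure γ] (hf : HasBoundedDerivs f M)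
    (hγ : Integrable id γ) (hc : |c| ≤ 1) (hs : |s| ≤ 1) (x : E) :
    ‖mehlerAvg γ c s f x‖ ≤ (‖f 0‖ + M * (1 + ∫ z, ‖z‖ ∂γ)) * (1 + ‖x‖) := by
  have hM := hf.bound_nonneg
  have hγ' : Integrable (fun z => ‖z‖) γ := hγ.norm
  have hf_le : ∀ z, ‖f (c • x + s • z)‖ ≤ ‖f 0‖ + M * ‖x‖ + M * ‖z‖ := fun z => by
    have hcx : ‖c • x‖ ≤ ‖x‖ := (norm_smul c x).trans_le (mul_le_of_le_one_left (norm_nonneg x) hc)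
    have hsz : ‖s • z‖ ≤ ‖z‖ := (norm_smul s z).trans_le (mul_le_of_le_one_left (norm_nonneg z) hs)
    refine (norm_le_of_norm_fderiv_le hf.differentiable hf.norm_fderiv_le _).trans ?_
    rw [add_assoc, ← mul_add]
    gcongr
    exact norm_add_le_of_le hcx hsz
  have hm : 0 ≤ ∫ z, ‖z‖ ∂γ := integral_nonneg fun z => norm_nonneg z
  calc ‖mehlerAvg γ c s f x‖
      ≤ ∫ z, (‖f 0‖ + M * ‖x‖ + M * ‖z‖) ∂γ :=
        norm_integral_le_of_norm_le ((integrable_const _).add (hγ'.const_mul M)) (.of_forall hf_le)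
    _ = ‖f 0‖ + M * ‖x‖ + M * ∫ z, ‖z‖ ∂γ := by
        rw [integral_add (integrable_const _) (hγ'.const_mul M), integral_const_mul]
        simp
    _ ≤ (‖f 0‖ + M * (1 + ∫ z, ‖z‖ ∂γ)) * (1 + ‖x‖) := by
        have h₁ := mul_nonneg (norm_nonneg (f 0)) (norm_nonneg x)
        have h₂ := mul_nonneg hM (mul_nonneg hm (norm_nonneg x))
        linarith

variable [BorelSpace E] [SecondCountableTopology E]

protected lemma mehlerAvg [IsProbabilityMeasure γ] (hf : HasBoundedDerivs f M)
    (hγ : Integrable id γ) (hc : |c| ≤ 1) : HasBoundedDerivs (mehlerAvg γ c s f) M where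
  contDiff := by
    rw [← one_add_one_eq_two, contDiff_succ_iff_fderiv]
    refine ⟨fun x => (hasFDerivAt_mehlerAvg hγ hf.contDiff_one hf.norm_fderiv_le
      x).differentiableAt, by simp, ?_⟩
    rw [fderiv_mehlerAvg hγ hf.contDiff_one hf.norm_fderiv_le]
    refine .const_smul c (contDiff_one_iff_hasFDerivAt.2
      ⟨_, ?_, hasFDerivAt_mehlerAvg hγ hf.contDiff_fderiv hf.norm_fderiv_fderiv_le⟩)
    exact (continuous_mehlerAvg (hf.contDiff_fderiv.continuous_fderiv one_ne_zero)
      hf.norm_fderiv_fderiv_le).const_smul c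
  norm_fderiv_le x := by
    rw [fderiv_mehlerAvg hγ hf.contDiff_one hf.norm_fderiv_le, Pi.smul_apply, norm_smul]
    exact (mul_le_of_le_one_left (norm_nonneg _) hc).trans (norm_mehlerAvg_le hf.norm_fderiv_le x)
  norm_fderiv_fderiv_le x := by
    rw [hf.fderiv_fderiv_mehlerAvg hγ, Pi.smul_apply, norm_smul]
    exact (mul_le_of_le_one_left (norm_nonneg _) (by simpa using hc)).trans
      (norm_mehlerAvg_le hf.norm_fderiv_fderiv_le x)

end HasBoundedDerivs

end BoundedDerivs

section OrnsteinUhlenbeck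

set_option maxSynthPendingDepth 3

variable {d : ℕ} {C : Matrix (Fin d) (Fin d) ℝ} {f : EuclideanSpace ℝ (Fin d) → ℝ} {a M t : ℝ}

lemma OU_eq_mehlerAvg (γ : Measure (EuclideanSpace ℝ (Fin d))) (t : ℝ)
    (f : EuclideanSpace ℝ (Fin d) → ℝ) :
    OU γ t f = mehlerAvg γ (exp (-t / 2)) √(1 - exp (-t)) f := rfl

lemma abs_exp_neg_div_two_le_one (ht : 0 ≤ t) : |exp (-t / 2)| ≤ 1 := by
  rw [abs_exp, exp_le_one_iff]
  linarith

lemma abs_sqrt_one_sub_exp_neg_le_one (t : ℝ) : |√(1 - exp (-t))| ≤ 1 := by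
  rw [abs_of_nonneg (sqrt_nonneg _), sqrt_le_one]
  linarith [exp_pos (-t)]

namespace HasBoundedDerivs

protected lemma OU (hf : HasBoundedDerivs f M) (hC : C.PosDef) (ht : 0 ≤ t) :
    HasBoundedDerivs (OU (gaussianM C) t f) M :=
  have := isGaussian_gaussianM hC
  hf.mehlerAvg IsGaussian.integrable_id (abs_exp_neg_div_two_le_one ht)

lemma le_OU (hf : HasBoundedDerivs f M) (hC : C.PosDef) (ha : ∀ x, a ≤ f x)
    (t : ℝ) (x : EuclideanSpace ℝ (Fin d)) : a ≤ OU (gaussianM C) t f x :=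
  have := isGaussian_gaussianM hC
  le_mehlerAvg (integrable_comp_affine IsGaussian.integrable_id hf.contDiff_one
    hf.norm_fderiv_le x) ha

lemma exists_forall_abs_OU_le (hf : HasBoundedDerivs f M) (hC : C.PosDef) :
    ∃ K, ∀ t, 0 ≤ t → ∀ x, |OU (gaussianM C) t f x| ≤ K * (1 + ‖x‖) :=
  have := isGaussian_gaussianM hC
  ⟨_, fun t ht => hf.norm_mehlerAvg_le_one_add_norm IsGaussian.integrable_id
    (abs_exp_neg_div_two_le_one ht) (abs_sqrt_one_sub_exp_neg_le_one t)⟩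

lemma abs_ouGenerator_le (hf : HasBoundedDerivs f M) (x : EuclideanSpace ℝ (Fin d)) :
    |ouGenerator C f x| ≤ (‖covTrace C‖ + 1) * M * (1 + ‖x‖) := by
  have hM := hf.bound_nonneg
  have hD : |fderiv ℝ f x x| ≤ M * ‖x‖ :=
    ContinuousLinearMap.le_of_opNorm_le _ (hf.norm_fderiv_le x) x
  have hD2 : |covTrace C (fderiv ℝ (fderiv ℝ f) x)| ≤ ‖covTrace C‖ * M :=
    (covTrace C).le_opNorm_of_le (hf.norm_fderiv_fderiv_le x)
  have hCMx : 0 ≤ ‖covTrace C‖ * M * ‖x‖ := by positivity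
  have hCM : 0 ≤ ‖covTrace C‖ * M := by positivity
  rw [ouGenerator, abs_div, abs_two, div_le_iff₀ two_pos]
  calc |covTrace C (fderiv ℝ (fderiv ℝ f) x) - fderiv ℝ f x x|
      ≤ ‖covTrace C‖ * M + M * ‖x‖ := (abs_sub _ _).trans (add_le_add hD2 hD)
    _ ≤ (‖covTrace C‖ + 1) * M * (1 + ‖x‖) * 2 := by nlinarith [norm_nonneg x]

lemma continuous_ouGenerator (hf : HasBoundedDerivs f M) : Continuous (ouGenerator C f) := by
  have hD := hf.contDiff_fderiv.continuous
  have hD2 := hf.contDiff_fderiv.continuous_fderiv one_ne_zero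
  unfold ouGenerator
  fun_prop

lemma integral_fderiv_comp_affine_apply_self (hf : HasBoundedDerivs f M)
    (hC : C.PosDef) (c s : ℝ) (x : EuclideanSpace ℝ (Fin d)) :
    ∫ z, fderiv ℝ f (c • x + s • z) z ∂(gaussianM C) =
      s * covTrace C (mehlerAvg (gaussianM C) c s (fderiv ℝ (fderiv ℝ f)) x) := by
  have := isGaussian_gaussianM hC
  have hD2_cont : Continuous fun z => fderiv ℝ (fderiv ℝ f) (c • x + s • z) :=
    (hf.contDiff_fderiv.continuous_fderiv one_ne_zero).comp (by fun_prop)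
  have hD2_int : Integrable (fun z => fderiv ℝ (fderiv ℝ f) (c • x + s • z)) (gaussianM C) :=
    (integrable_const M).mono' hD2_cont.aestronglyMeasurable
      (.of_forall fun _ => hf.norm_fderiv_fderiv_le _)
  have hfderiv : ∀ z, HasFDerivAt (fun z => fderiv ℝ f (c • x + s • z))
      (s • fderiv ℝ (fderiv ℝ f) (c • x + s • z)) z := fun z => by
    refine ((hf.contDiff_fderiv.differentiable one_ne_zero _).hasFDerivAt.comp z
      (((hasFDerivAt_id z).const_smul s).const_add (c • x))).congr_fderiv ?_
    ext v w
    simp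
  have hDz_int : Integrable (fun z => ‖z‖ * ‖fderiv ℝ f (c • x + s • z)‖) (gaussianM C) := by
    refine integrable_of_norm_le_one_add_norm_pow (K := M) (n := 1) ?_ fun z => ?_
    · exact continuous_norm.mul (hf.contDiff_fderiv.continuous.comp (by fun_prop)).norm
    · rw [norm_mul, norm_norm, norm_norm, mul_comm, pow_one]
      have := hf.bound_nonneg
      gcongr
      · exact hf.norm_fderiv_le _
      · linarith
  rw [integral_apply_self_gaussianM hC (fun z => (hfderiv z).differentiableAt)
    (integrable_comp_affine IsGaussian.integrable_id hf.contDiff_fderiv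
      hf.norm_fderiv_fderiv_le x) ?_ hDz_int]
  · simp only [(hfderiv _).fderiv, map_smul, smul_eq_mul]
    rw [integral_const_mul, (covTrace C).integral_comp_comm hD2_int, mehlerAvg]
  · exact (hD2_int.fun_smul s).congr (.of_forall fun z => (hfderiv z).fderiv.symm)

-- Since `c' = -c/2` and `s' = c² / (2 s)`, Stein's identity turns the `z`-term of the
-- time derivative into the second-order part of the generator.
lemma hasDerivAt_OU (hf : HasBoundedDerivs f M) (hC : C.PosDef) (ht : 0 < t)
    (x : EuclideanSpace ℝ (Fin d)) :
    HasDerivAt (fun τ => OU (gaussianM C) τ f x)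
      (ouGenerator C (OU (gaussianM C) t f) x) t := by
  have := isGaussian_gaussianM hC
  have hpos : 0 < 1 - exp (-t) := by simpa using ht
  have hc : HasDerivAt (fun τ : ℝ => exp (-τ / 2)) (-exp (-t / 2) / 2) t :=
    ((hasDerivAt_neg t).div_const 2).exp.congr_deriv (by ring)
  have hs : HasDerivAt (fun τ => √(1 - exp (-τ))) (exp (-t / 2) ^ 2 / (2 * √(1 - exp (-t)))) t :=
    ((hasDerivAt_neg t).exp.const_sub 1).sqrt hpos.ne' |>.congr_deriv (by
      rw [mul_neg_one, neg_neg, ← exp_nat_mul, Nat.cast_ofNat, mul_div_cancel₀ _ two_ne_zero])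
  refine (hasDerivAt_mehlerAvg_comp IsGaussian.integrable_id hf.contDiff_one hf.norm_fderiv_le
    hc hs x).congr_deriv ?_
  rw [hf.integral_fderiv_comp_affine_apply_self hC, ouGenerator, OU_eq_mehlerAvg,
    hf.fderiv_fderiv_mehlerAvg IsGaussian.integrable_id,
    fderiv_mehlerAvg IsGaussian.integrable_id hf.contDiff_one hf.norm_fderiv_le]
  have := sqrt_pos.2 hpos
  simp only [Pi.smul_apply, FunLike.coe_smul, map_smul, smul_eq_mul]
  field_simp
  ring

end HasBoundedDerivs

end OrnsteinUhlenbeck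

section Entropy

set_option maxSynthPendingDepth 3

variable {d : ℕ} {C : Matrix (Fin d) (Fin d) ℝ} {ρ : EuclideanSpace ℝ (Fin d) → ℝ} {a M t : ℝ}

lemma abs_log_le_of_le {u K r : ℝ} (ha : 0 < a) (hau : a ≤ u) (huK : u ≤ K * (1 + r))
    (hr : 0 ≤ r) : |log u| ≤ (|log a| + K) * (1 + r) := by
  have hu : 0 < u := ha.trans_le hau
  have hlog : |log u| ≤ |log a| + u := abs_le.2
    ⟨by linarith [neg_abs_le (log a), log_le_log ha hau],
      by linarith [log_le_self hu.le, abs_nonneg (log a)]⟩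
  nlinarith [mul_nonneg (abs_nonneg (log a)) hr]

lemma abs_log_add_one_le_of_le {u K r : ℝ} (ha : 0 < a) (hau : a ≤ u) (huK : u ≤ K * (1 + r))
    (hr : 0 ≤ r) : |log u + 1| ≤ (|log a| + K + 1) * (1 + r) := by
  have hlog := abs_log_le_of_le ha hau huK hr
  have htri := abs_add_le (log u) 1
  rw [abs_one] at htri
  linarith

lemma gradient_log_add_one {x : EuclideanSpace ℝ (Fin d)} (hρ : DifferentiableAt ℝ ρ x)
    (hx : ρ x ≠ 0) : gradient (fun y => log (ρ y) + 1) x = (ρ x)⁻¹ • gradient ρ x := by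
  rw [gradient, fderiv_add_const, fderiv.log hρ hx, map_smul, gradient]

lemma HasBoundedDerivs.integral_mul_ouGenerator (hρ : HasBoundedDerivs ρ M) (hC : C.PosDef)
    {g : EuclideanSpace ℝ (Fin d) → ℝ} {L : ℝ} (hg : ContDiff ℝ 1 g)
    (hL : ∀ x, ‖fderiv ℝ g x‖ ≤ L) :
    ∫ x, g x * ouGenerator C ρ x ∂(gaussianM C) =
      -(1 / 2) * ∫ x, ⟪matrixOp C (gradient g x), gradient ρ x⟫ ∂(gaussianM C) := by
  have := isGaussian_gaussianM hC
  have hg_cont := hg.continuous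
  have hDg := hg.continuous_fderiv one_ne_zero
  have hD := hρ.contDiff_fderiv.continuous
  have hD2 := hρ.contDiff_fderiv.continuous_fderiv one_ne_zero
  have hL₀ : 0 ≤ L := (norm_nonneg _).trans (hL 0)
  have hgD_le : ∀ x, ‖g x • fderiv ℝ ρ x‖ ≤ (‖g 0‖ + L) * M * (1 + ‖x‖) := fun x => by
    grw [norm_smul, norm_le_one_add_norm hg hL x, hρ.norm_fderiv_le x]
    exact (mul_right_comm _ _ _).le
  refine integral_mul_ouGenerator_of_integrable hC (hg.differentiable one_ne_zero)
    (hρ.contDiff_fderiv.differentiable one_ne_zero) ?_ ?_ ?_ ?_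
  · exact integrable_of_norm_le_one_add_norm_pow (by fun_prop) (n := 1) (by simpa using hgD_le)
  · refine integrable_of_norm_le_one_add_norm_pow (by fun_prop) (K := (‖g 0‖ + L) * M) (n := 2)
      fun x => ?_
    calc ‖‖x‖ * ‖g x • fderiv ℝ ρ x‖‖ ≤ (1 + ‖x‖) * ((‖g 0‖ + L) * M * (1 + ‖x‖)) := by
          rw [norm_mul, norm_norm, norm_norm]
          gcongr
          · linarith
          · exact hgD_le x
      _ = (‖g 0‖ + L) * M * (1 + ‖x‖) ^ 2 := by ring
  · refine integrable_of_norm_le_one_add_norm_pow (by fun_prop) (K := (‖g 0‖ + L) * M) (n := 1)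
      fun x => ?_
    grw [norm_smul, norm_le_one_add_norm hg hL x, hρ.norm_fderiv_fderiv_le x, pow_one]
    exact (mul_right_comm _ _ _).le
  · refine integrable_of_norm_le_one_add_norm_pow ?_ (K := L * M) (n := 0) fun x => ?_
    · exact ((ContinuousLinearMap.smulRightL ℝ _ _).continuous.comp hDg).clm_apply hD
    · grw [ContinuousLinearMap.norm_smulRight_apply, hL x, hρ.norm_fderiv_le x, pow_zero, mul_one]

lemma HasBoundedDerivs.integral_log_add_one_mul_ouGenerator (hρ : HasBoundedDerivs ρ M)
    (hC : C.PosDef) (ha : 0 < a) (haρ : ∀ x, a ≤ ρ x) :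
    ∫ x, (log (ρ x) + 1) * ouGenerator C ρ x ∂(gaussianM C) =
      -(1 / 2) * ∫ x, ⟪matrixOp C (gradient ρ x), gradient ρ x⟫ / ρ x ∂(gaussianM C) := by
  have hρ_ne : ∀ x, ρ x ≠ 0 := fun x => (ha.trans_le (haρ x)).ne'
  have hfderiv_le : ∀ x, ‖fderiv ℝ (fun y => log (ρ y) + 1) x‖ ≤ a⁻¹ * M := fun x => by
    rw [fderiv_add_const, fderiv.log (hρ.differentiable x) (hρ_ne x), norm_smul, norm_inv,
      Real.norm_of_nonneg (ha.le.trans (haρ x))]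
    gcongr
    · exact haρ x
    · exact hρ.norm_fderiv_le x
  rw [hρ.integral_mul_ouGenerator hC ((hρ.contDiff_one.log hρ_ne).add contDiff_const) hfderiv_le]
  simp only [gradient_log_add_one (hρ.differentiable _) (hρ_ne _), map_smul, real_inner_smul_left,
    div_eq_inv_mul]

lemma integrable_mul_log_gaussianM (hC : C.PosDef) (hρ : Continuous ρ) (ha : 0 < a)
    (haρ : ∀ x, a ≤ ρ x) {K : ℝ} (hK : ∀ x, |ρ x| ≤ K * (1 + ‖x‖)) :
    Integrable (fun x => ρ x * log (ρ x)) (gaussianM C) := by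
  have := isGaussian_gaussianM hC
  refine integrable_of_norm_le_one_add_norm_pow
    (hρ.mul (hρ.log fun x => (ha.trans_le (haρ x)).ne')) (K := K * (|log a| + K)) (n := 2)
    fun x => ?_
  calc ‖ρ x * log (ρ x)‖ ≤ K * (1 + ‖x‖) * ((|log a| + K) * (1 + ‖x‖)) :=
        norm_mul_le_of_le (hK x)
          (abs_log_le_of_le ha (haρ x) ((le_abs_self _).trans (hK x)) (norm_nonneg x))
    _ = K * (|log a| + K) * (1 + ‖x‖) ^ 2 := by ring

lemma HasBoundedDerivs.norm_log_add_one_mul_ouGenerator_le (hρ : HasBoundedDerivs ρ M)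
    (ha : 0 < a) (haρ : ∀ x, a ≤ ρ x) {K : ℝ} (hK : ∀ x, |ρ x| ≤ K * (1 + ‖x‖))
    (x : EuclideanSpace ℝ (Fin d)) :
    ‖(log (ρ x) + 1) * ouGenerator C ρ x‖ ≤
      (|log a| + K + 1) * ((‖covTrace C‖ + 1) * M) * (1 + ‖x‖) ^ 2 :=
  calc ‖(log (ρ x) + 1) * ouGenerator C ρ x‖
      ≤ (|log a| + K + 1) * (1 + ‖x‖) * ((‖covTrace C‖ + 1) * M * (1 + ‖x‖)) :=
        norm_mul_le_of_le
          (abs_log_add_one_le_of_le ha (haρ x) ((le_abs_self _).trans (hK x)) (norm_nonneg x))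
          (hρ.abs_ouGenerator_le x)
    _ = (|log a| + K + 1) * ((‖covTrace C‖ + 1) * M) * (1 + ‖x‖) ^ 2 := by ring

lemma HasBoundedDerivs.hasDerivAt_integral_OU_mul_log (hρ : HasBoundedDerivs ρ M)
    (hC : C.PosDef) (ha : 0 < a) (haρ : ∀ x, a ≤ ρ x) (ht : 0 < t) :
    HasDerivAt (fun s => ∫ x, OU (gaussianM C) s ρ x * log (OU (gaussianM C) s ρ x) ∂(gaussianM C))
      (∫ x, (log (OU (gaussianM C) t ρ x) + 1) * ouGenerator C (OU (gaussianM C) t ρ) x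
        ∂(gaussianM C)) t := by
  have := isGaussian_gaussianM hC
  obtain ⟨K, hK⟩ := hρ.exists_forall_abs_OU_le hC
  have ha_OU := hρ.le_OU hC haρ
  have hOU_ne : ∀ s x, OU (gaussianM C) s ρ x ≠ 0 := fun s x => (ha.trans_le (ha_OU s x)).ne'
  have hOU : ∀ s ∈ Set.Ioi (0 : ℝ), HasBoundedDerivs (OU (gaussianM C) s ρ) M := fun s hs =>
    hρ.OU hC (le_of_lt hs)
  have hent_int : ∀ s ∈ Set.Ioi (0 : ℝ), Integrable
      (fun x => OU (gaussianM C) s ρ x * log (OU (gaussianM C) s ρ x)) (gaussianM C) := fun s hs =>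
    integrable_mul_log_gaussianM hC (hOU s hs).contDiff.continuous ha (ha_OU s) (hK s (le_of_lt hs))
  have hderiv_cont : Continuous fun x => (log (OU (gaussianM C) t ρ x) + 1) *
      ouGenerator C (OU (gaussianM C) t ρ) x :=
    (((hOU t ht).contDiff.continuous.log (hOU_ne t)).add_const 1).mul
      (hOU t ht).continuous_ouGenerator
  refine (hasDerivAt_integral_of_dominated_loc_of_deriv_le (s := Set.Ioi 0)
    (bound := fun x => (|log a| + K + 1) * ((‖covTrace C‖ + 1) * M) * (1 + ‖x‖) ^ 2)
    (F' := fun s x => (log (OU (gaussianM C) s ρ x) + 1) * ouGenerator C (OU (gaussianM C) s ρ) x)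
    (Ioi_mem_nhds ht) ?_ (hent_int t ht) hderiv_cont.aestronglyMeasurable
    (.of_forall fun x s hs => ?_) ((integrable_one_add_norm_pow 2).const_mul _)
    (.of_forall fun x s hs => ?_)).2
  · filter_upwards [Ioi_mem_nhds ht] with s hs using (hent_int s hs).1
  · exact (hOU s hs).norm_log_add_one_mul_ouGenerator_le ha (ha_OU s) (hK s (le_of_lt hs)) x
  · exact (hasDerivAt_mul_log (hOU_ne s x)).comp s (hρ.hasDerivAt_OU hC hs x)

end Entropy

theorem entropy_dissipation_ou_general {d : ℕ} {C : Matrix (Fin d) (Fin d) ℝ} (hC : C.PosDef)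
    {ρ₀ : EuclideanSpace ℝ (Fin d) → ℝ} (hρ₀ : ContDiff ℝ 2 ρ₀) {a M : ℝ} (ha : 0 < a)
    (hlow : ∀ x, a ≤ ρ₀ x) (hder1 : ∀ x, ‖fderiv ℝ ρ₀ x‖ ≤ M)
    (hder2 : ∀ x, ‖fderiv ℝ (fderiv ℝ ρ₀) x‖ ≤ M) {t : ℝ} (ht : 0 < t) :
    HasDerivAt
      (fun s => ∫ x, OU (gaussianM C) s ρ₀ x * Real.log (OU (gaussianM C) s ρ₀ x)
        ∂(gaussianM C))
      (-(1 / 2) *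
        ∫ x,
          ⟪toEuc (Matrix.mulVec C (fromEuc (gradient (OU (gaussianM C) t ρ₀) x))),
              gradient (OU (gaussianM C) t ρ₀) x⟫ / OU (gaussianM C) t ρ₀ x
          ∂(gaussianM C))
      t := by
  have hbdd : HasBoundedDerivs ρ₀ M := ⟨hρ₀, hder1, hder2⟩
  have hentropy := hbdd.hasDerivAt_integral_OU_mul_log hC ha hlow ht
  rwa [(hbdd.OU hC ht.le).integral_log_add_one_mul_ouGenerator hC ha (hbdd.le_OU hC hlow t)]
    at hentropy

/-- De Bruijn / entropy-dissipation identity along the Ornstein–Uhlenbeck flow: with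
`ρ_t = P_t ρ₀`, the map `t ↦ ∫ ρ_t log ρ_t dγ` is differentiable on `(0,∞)` and
`d/dt ∫ ρ_t log ρ_t dγ = −½ ∫ ⟨C ∇ρ_t, ∇ρ_t⟩ / ρ_t dγ`. -/
theorem entropy_dissipation_ou (d : ℕ) (hd : 0 < d)
    (C : Matrix (Fin d) (Fin d) ℝ) (hC : C.PosDef)
    (ρ₀ : EuclideanSpace ℝ (Fin d) → ℝ) (hsmooth : ContDiff ℝ (⊤ : ℕ∞) ρ₀)
    (a b : ℝ) (ha : 0 < a) (hlow : ∀ x, a ≤ ρ₀ x) (hup : ∀ x, ρ₀ x ≤ b)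
    (M : ℝ) (hder1 : ∀ x, ‖fderiv ℝ ρ₀ x‖ ≤ M)
    (hder2 : ∀ x, ‖fderiv ℝ (fderiv ℝ ρ₀) x‖ ≤ M)
    (hmass : ∫ x, ρ₀ x ∂(gaussianM C) = 1)
    (t : ℝ) (ht : 0 < t) :
    HasDerivAt
      (fun s => ∫ x, OU (gaussianM C) s ρ₀ x * Real.log (OU (gaussianM C) s ρ₀ x)
        ∂(gaussianM C))
      (-(1 / 2) *
        ∫ x,
          ⟪toEuc (Matrix.mulVec C (fromEuc (gradient (OU (gaussianM C) t ρ₀) x))),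
              gradient (OU (gaussianM C) t ρ₀) x⟫ / OU (gaussianM C) t ρ₀ x
          ∂(gaussianM C))
      t :=
  entropy_dissipation_ou_general hC (contDiff_infty.1 hsmooth 2) ha hlow hder1 hder2 ht
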